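/- arXiv:1701.07682 — 3 statements merged into one kernel-verified Lean document; each statement's English description precedes it below -/
import Mathlib

section
/- Let n ≥ 1 be a natural number and set c_5² = 1/(4(2λ+1)²(2λ+5)). If λ ≥ 0, then c_5²·(n+8)n³(n+λ)²(n+2λ)² ≤ ‖B_n‖_F² ≤ c_5²·(n+2λ+2)⁸. If -1/2 < λ ≤ 0, then c_5²·(n+2λ+8)n²(n+λ)²(n+2λ)³ ≤ ‖B_n‖_F² ≤ c_5²·(n+λ+2)⁸. -/
/-- `h_x^2 = Γ(x+2λ)/((x+λ)Γ(x+1))`. -/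
noncomputable def hsq (lam x : ℝ) : ℝ :=
  Real.Gamma (x + 2*lam) / ((x + lam) * Real.Gamma (x + 1))

/-- `α_k = (2k-1+λ) h_{2k-1}`. -/
noncomputable def gegAlpha (lam : ℝ) (k : ℕ) : ℝ :=
  (2*(k:ℝ) - 1 + lam) * Real.sqrt (hsq lam (2*(k:ℝ) - 1))

/-- `β_k = 1/h_{2k}`. -/
noncomputable def gegBeta (lam : ℝ) (k : ℕ) : ℝ :=
  1 / Real.sqrt (hsq lam (2*(k:ℝ)))

/-- `α̃_k^2 = ((2k-2+λ) h_{2k-2})^2`, with `α̃_1^2 = λΓ(2λ) = Γ(2λ+1)/2`. -/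
noncomputable def gegAlphaTildeSq (lam : ℝ) (k : ℕ) : ℝ :=
  if k = 1 then Real.Gamma (2*lam + 1) / 2
  else (2*(k:ℝ) - 2 + lam)^2 * hsq lam (2*(k:ℝ) - 2)

/-- `β̃_k = 1/h_{2k-1}`. -/
noncomputable def gegBetaTilde (lam : ℝ) (k : ℕ) : ℝ :=
  1 / Real.sqrt (hsq lam (2*(k:ℝ) - 1))

/-- The matrix `A_m` with entries `a_{kj} = (Σ_{i=1}^{min(k,j)} α_i^2) β_k β_j` (1-based). -/
noncomputable def Amat (lam : ℝ) (m : ℕ) : Matrix (Fin m) (Fin m) ℝ :=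
  fun k j => (∑ i ∈ Finset.Icc 1 (min (k.val+1) (j.val+1)), (gegAlpha lam i)^2) *
    gegBeta lam (k.val+1) * gegBeta lam (j.val+1)

/-- The matrix `Ã_m` with entries `ã_{kj} = (Σ_{i=1}^{min(k,j)} α̃_i^2) β̃_k β̃_j` (1-based). -/
noncomputable def AmatTilde (lam : ℝ) (m : ℕ) : Matrix (Fin m) (Fin m) ℝ :=
  fun k j => (∑ i ∈ Finset.Icc 1 (min (k.val+1) (j.val+1)), gegAlphaTildeSq lam i) *
    gegBetaTilde lam (k.val+1) * gegBetaTilde lam (j.val+1)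

/-- `B_n = 4 A_m` for `n = 2m` and `B_n = 4 Ã_m` for `n = 2m-1`; in both cases `m = (n+1)/2`. -/
noncomputable def Bmat (lam : ℝ) (n : ℕ) : Matrix (Fin ((n+1)/2)) (Fin ((n+1)/2)) ℝ :=
  if n % 2 = 0 then (4:ℝ) • Amat lam ((n+1)/2) else (4:ℝ) • AmatTilde lam ((n+1)/2)

/-- Maximum absolute row-sum norm. -/
noncomputable def rowSumNorm {m : ℕ} (A : Matrix (Fin m) (Fin m) ℝ) : ℝ :=
  ⨆ k, ∑ j, |A k j|

/-- Squared Frobenius norm. -/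
noncomputable def frobSq {m : ℕ} (A : Matrix (Fin m) (Fin m) ℝ) : ℝ :=
  ∑ k, ∑ j, (A k j)^2

open Finset

/-- The matrix with entries `S (min k j) * β k * β j`. -/
def minKernel (S β : ℕ → ℝ) (m : ℕ) : Matrix (Fin m) (Fin m) ℝ :=
  fun k j => S (min (k : ℕ) j) * β k * β j

/-- Increment `‖B_n‖_F² - ‖B_{n-2}‖_F²` at `n = x`, multiplied by `4(2λ+1)²(2λ+5)`. -/
noncomputable def frobIncr (lam x : ℝ) : ℝ :=
  16 * (2 * lam + 5) * (x * (x + lam) * (x + 2 * lam)) ^ 2 +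
    16 * x * (x - 1) * (x - 2) * (x + lam) * (x + 2 * lam) *
      ((x - 2) * (x + 2 * lam) - 4 / (2 * lam + 3))

lemma frobSq_minKernel_succ (S β : ℕ → ℝ) (m : ℕ) :
    frobSq (minKernel S β (m + 1)) = frobSq (minKernel S β m) + (S m * β m ^ 2) ^ 2 +
      2 * β m ^ 2 * ∑ j ∈ range m, S j ^ 2 * β j ^ 2 := by
  have hmin (j : Fin m) : min (j : ℕ) m = j := min_eq_left j.2.le
  have hmin' (j : Fin m) : min m (j : ℕ) = j := min_eq_right j.2.le
  simp only [frobSq, minKernel, Fin.sum_univ_castSucc, Fin.val_castSucc, Fin.val_last,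
    sum_add_distrib, hmin, hmin', min_self, ← Fin.sum_univ_eq_sum_range, mul_sum]
  have h1 : ∑ j : Fin m, (S j * β j * β m) ^ 2 + ∑ j : Fin m, (S j * β m * β j) ^ 2 =
      ∑ j : Fin m, 2 * β m ^ 2 * (S j ^ 2 * β j ^ 2) := by
    rw [← sum_add_distrib]
    exact sum_congr rfl fun j _ => by ring
  rw [← h1]
  ring

lemma frobSq_smul {m : ℕ} (c : ℝ) (A : Matrix (Fin m) (Fin m) ℝ) :
    frobSq (c • A) = c ^ 2 * frobSq A := by
  simp only [frobSq, Matrix.smul_apply, smul_eq_mul, mul_pow, mul_sum]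

lemma Gamma_add_two {x : ℝ} (hx : 0 < x) :
    Real.Gamma (x + 2) = (x + 1) * (x * Real.Gamma x) := by
  rw [show x + 2 = x + 1 + 1 by ring, Real.Gamma_add_one (by positivity),
    Real.Gamma_add_one (ne_of_gt hx)]

/-- The closed form of the partial sums of `α_i²` and `α̃_i²`, at node `x`. -/
noncomputable def alphaSum (lam x : ℝ) : ℝ :=
  Real.Gamma (x + 2 * lam + 1) / (2 * (2 * lam + 1) * Real.Gamma x)

lemma alphaSum_add_two {lam x : ℝ} (hl : -(1 / 2) < lam) (hx : 1 ≤ x) :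
    alphaSum lam (x + 2) = alphaSum lam x + (x + 1 + lam) ^ 2 * hsq lam (x + 1) := by
  have h0 : 0 < x := by linarith
  have h1 : 0 < x + 2 * lam + 1 := by linarith
  have h2 : x + 1 + lam ≠ 0 := by linarith
  have h3 : 2 * lam + 1 ≠ 0 := by linarith
  have hG := (Real.Gamma_pos_of_pos h0).ne'
  have hx1 : x + 1 ≠ 0 := by linarith
  unfold alphaSum hsq
  rw [show x + 2 + 2 * lam + 1 = (x + 2 * lam + 1) + 2 by ring, Gamma_add_two h1,
    Gamma_add_two h0, show x + 1 + 2 * lam = x + 2 * lam + 1 by ring,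
    show x + 1 + 1 = x + 2 by ring, Gamma_add_two h0]
  field_simp
  ring

lemma hsq_nonneg {lam x : ℝ} (hl : -(1 / 2) < lam) (hx : 1 ≤ x) : 0 ≤ hsq lam x := by
  have := Real.Gamma_pos_of_pos (show 0 < x + 2 * lam by linarith)
  have := Real.Gamma_pos_of_pos (show 0 < x + 1 by linarith)
  have : 0 < x + lam := by linarith
  unfold hsq
  positivity

lemma sum_gegAlpha {lam : ℝ} (hl : -(1 / 2) < lam) (m : ℕ) :
    ∑ i ∈ Icc 1 (m + 1), gegAlpha lam i ^ 2 = alphaSum lam (2 * m + 2) := by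
  induction m with
  | zero =>
    have h1 : 0 < 2 * lam + 1 := by linarith
    have h2 : 1 + lam ≠ 0 := by linarith
    have hs := hsq_nonneg hl le_rfl (x := 1)
    simp only [zero_add, Icc_self, sum_singleton, gegAlpha, Nat.cast_one, Nat.cast_zero,
      mul_zero, mul_pow, mul_one]
    rw [show (2 : ℝ) - 1 = 1 by norm_num, Real.sq_sqrt hs, hsq, alphaSum,
      show 2 + 2 * lam + 1 = (2 * lam + 1) + 2 by ring, Gamma_add_two h1,
      show (1 : ℝ) + 1 = 2 by norm_num, Real.Gamma_two, show 1 + 2 * lam = 2 * lam + 1 by ring,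
      eq_div_iff (by positivity)]
    field_simp
    ring
  | succ m ih =>
    have hm : (0 : ℝ) ≤ m := m.cast_nonneg
    rw [sum_Icc_succ_top (by omega), ih]
    push_cast
    rw [show 2 * ((m : ℝ) + 1) + 2 = 2 * m + 2 + 2 by ring,
      alphaSum_add_two (x := 2 * m + 2) hl (by linarith), gegAlpha, mul_pow]
    push_cast
    rw [show 2 * ((m : ℝ) + 1 + 1) - 1 = 2 * m + 2 + 1 by ring,
      Real.sq_sqrt (hsq_nonneg hl (by linarith))]

lemma sum_gegAlphaTildeSq {lam : ℝ} (hl : -(1 / 2) < lam) (m : ℕ) :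
    ∑ i ∈ Icc 1 (m + 1), gegAlphaTildeSq lam i = alphaSum lam (2 * m + 1) := by
  induction m with
  | zero =>
    have h1 : 2 * lam + 1 ≠ 0 := by linarith
    simp only [zero_add, Icc_self, sum_singleton, gegAlphaTildeSq, Nat.cast_zero,
      mul_zero, if_true]
    rw [alphaSum, show 1 + 2 * lam + 1 = 2 * lam + 1 + 1 by ring, Real.Gamma_add_one h1,
      Real.Gamma_one]
    field_simp
  | succ m ih =>
    have hm : (0 : ℝ) ≤ m := m.cast_nonneg
    rw [sum_Icc_succ_top (by omega), ih]
    push_cast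
    rw [show 2 * ((m : ℝ) + 1) + 1 = 2 * m + 1 + 2 by ring,
      alphaSum_add_two hl (by linarith), gegAlphaTildeSq, if_neg (by omega)]
    push_cast
    rw [show 2 * ((m : ℝ) + 1 + 1) - 2 = 2 * m + 1 + 1 by ring]

section Kernel

variable {lam e : ℝ} {S β : ℕ → ℝ}

lemma sum_sq_alphaSum (hl : -(1 / 2) < lam) (he : e = 1 ∨ e = 2)
    (hS : ∀ m : ℕ, S m = alphaSum lam (2 * m + e))
    (hβ : ∀ m : ℕ, β m ^ 2 = 1 / hsq lam (2 * m + e)) (m : ℕ) :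
    ∑ j ∈ range m, S j ^ 2 * β j ^ 2 =
      Real.Gamma (2 * m + e + 2 * lam) * (2 * m + e - 1) / Real.Gamma (2 * m + e) *
        ((2 * m + e - 2) * (2 * m + e + 2 * lam) *
          ((2 * m + e - 2) * (2 * m + e + 2 * lam) - 4 / (2 * lam + 3)) /
            (2 * (2 * lam + 5))) / (4 * (2 * lam + 1) ^ 2) := by
  induction m with
  | zero => rcases he with rfl | rfl <;> simp
  | succ m ih =>
    have hx : 1 ≤ 2 * (m : ℝ) + e := by
      have hm : (0 : ℝ) ≤ m := m.cast_nonneg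
      rcases he with rfl | rfl <;> linarith
    rw [sum_range_succ, ih, hS, hβ]
    push_cast
    rw [show 2 * ((m : ℝ) + 1) + e = 2 * m + e + 2 by ring]
    generalize 2 * (m : ℝ) + e = x at hx
    have h0 : 0 < x := by linarith
    have h1 : 0 < x + 2 * lam := by linarith
    have h2 : x + lam ≠ 0 := by linarith
    have h3 : 2 * lam + 1 ≠ 0 := by linarith
    have h4 : 2 * lam + 3 ≠ 0 := by linarith
    have h5 : 2 * lam + 5 ≠ 0 := by linarith
    have h6 : x + 1 ≠ 0 := by linarith
    have hG := (Real.Gamma_pos_of_pos h0).ne'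
    have hG' := (Real.Gamma_pos_of_pos h1).ne'
    unfold alphaSum hsq
    rw [show x + 2 + 2 * lam = x + 2 * lam + 2 by ring, Gamma_add_two h1, Gamma_add_two h0,
      Real.Gamma_add_one h1.ne', Real.Gamma_add_one h0.ne']
    field_simp
    ring

lemma frobSq_minKernel (hl : -(1 / 2) < lam) (he : e = 1 ∨ e = 2)
    (hS : ∀ m : ℕ, S m = alphaSum lam (2 * m + e))
    (hβ : ∀ m : ℕ, β m ^ 2 = 1 / hsq lam (2 * m + e)) (m : ℕ) :
    4 * (2 * lam + 1) ^ 2 * (2 * lam + 5) * frobSq ((4 : ℝ) • minKernel S β m) =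
      ∑ j ∈ range m, frobIncr lam (2 * j + e) := by
  rw [frobSq_smul]
  induction m with
  | zero => simp [frobSq]
  | succ m ih =>
    have hx : 1 ≤ 2 * (m : ℝ) + e := by
      have hm : (0 : ℝ) ≤ m := m.cast_nonneg
      rcases he with rfl | rfl <;> linarith
    rw [sum_range_succ, ← ih, frobSq_minKernel_succ, sum_sq_alphaSum hl he hS hβ, hS, hβ]
    generalize 2 * (m : ℝ) + e = x at hx
    have h0 : 0 < x := by linarith
    have h1 : 0 < x + 2 * lam := by linarith
    have h2 : x + lam ≠ 0 := by linarith
    have h3 : 2 * lam + 1 ≠ 0 := by linarith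
    have h4 : 2 * lam + 3 ≠ 0 := by linarith
    have h5 : 2 * lam + 5 ≠ 0 := by linarith
    have hG := (Real.Gamma_pos_of_pos h0).ne'
    have hG' := (Real.Gamma_pos_of_pos h1).ne'
    unfold alphaSum hsq frobIncr
    rw [Real.Gamma_add_one h1.ne', Real.Gamma_add_one h0.ne']
    field_simp
    ring

end Kernel

/-- Bounds for sums of `g` along an arithmetic progression of step two, from bounds on increments. -/
lemma sum_range_bounds {L U g : ℝ → ℝ} {e : ℝ} (he : 1 ≤ e) (hLe : L e ≤ g e) (hUe : g e ≤ U e)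
    (hL : ∀ x, 3 ≤ x → L x - L (x - 2) ≤ g x) (hU : ∀ x, 3 ≤ x → g x ≤ U x - U (x - 2)) (m : ℕ) :
    L (2 * m + e) ≤ ∑ j ∈ range (m + 1), g (2 * j + e) ∧
      ∑ j ∈ range (m + 1), g (2 * j + e) ≤ U (2 * m + e) := by
  induction m with
  | zero => simpa using ⟨hLe, hUe⟩
  | succ m ih =>
    have hm : (0 : ℝ) ≤ m := m.cast_nonneg
    rw [sum_range_succ]
    push_cast
    have h1 := hL (2 * (m + 1) + e) (by linarith)
    have h2 := hU (2 * (m + 1) + e) (by linarith)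
    rw [show 2 * ((m : ℝ) + 1) + e - 2 = 2 * m + e by ring] at h1 h2
    constructor <;> linarith [ih.1, ih.2]

lemma le_frobIncr_of_nonneg {lam x : ℝ} (hl : 0 ≤ lam) (hx : 2 ≤ x) :
    (x + 8) * x ^ 3 * (x + lam) ^ 2 * (x + 2 * lam) ^ 2 -
      (x - 2 + 8) * (x - 2) ^ 3 * (x - 2 + lam) ^ 2 * (x - 2 + 2 * lam) ^ 2 ≤ frobIncr lam x := by
  obtain ⟨w, hw, rfl⟩ : ∃ w : ℝ, 0 ≤ w ∧ x = w + 2 := ⟨x - 2, by linarith, by ring⟩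
  have h3 : 0 < 2 * lam + 3 := by linarith
  refine le_of_mul_le_mul_left ?_ h3
  unfold frobIncr
  field_simp
  rw [← sub_nonneg]
  ring_nf
  positivity

lemma frobIncr_le_of_nonneg {lam x : ℝ} (hl : 0 ≤ lam) (hx : 2 ≤ x) :
    frobIncr lam x ≤ (x + 2 * lam + 2) ^ 8 - (x - 2 + 2 * lam + 2) ^ 8 := by
  obtain ⟨w, hw, rfl⟩ : ∃ w : ℝ, 0 ≤ w ∧ x = w + 2 := ⟨x - 2, by linarith, by ring⟩
  have h3 : 0 < 2 * lam + 3 := by linarith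
  refine le_of_mul_le_mul_left ?_ h3
  unfold frobIncr
  field_simp
  rw [← sub_nonneg]
  ring_nf
  positivity

lemma exists_eq_neg_div {lam : ℝ} (hl : -(1 / 2) < lam) (hl' : lam ≤ 0) :
    ∃ z : ℝ, 0 ≤ z ∧ lam = -z / (2 * (1 + z)) := by
  have h : 0 < 1 + 2 * lam := by linarith
  refine ⟨-2 * lam / (1 + 2 * lam), div_nonneg (by linarith) h.le, ?_⟩
  have h1 : 1 + -2 * lam / (1 + 2 * lam) = 1 / (1 + 2 * lam) := by
    rw [eq_div_iff h.ne', add_mul, div_mul_cancel₀ _ h.ne']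
    ring
  have h2 : 1 + lam * 2 ≠ 0 := by linarith
  rw [h1]
  field_simp

lemma le_frobIncr_of_nonpos {lam x : ℝ} (hl : -(1 / 2) < lam) (hl' : lam ≤ 0) (hx : 2 ≤ x) :
    (x + 2 * lam + 8) * x ^ 2 * (x + lam) ^ 2 * (x + 2 * lam) ^ 3 -
      (x - 2 + 2 * lam + 8) * (x - 2) ^ 2 * (x - 2 + lam) ^ 2 * (x - 2 + 2 * lam) ^ 3 ≤
        frobIncr lam x := by
  obtain ⟨w, hw, rfl⟩ : ∃ w : ℝ, 0 ≤ w ∧ x = w + 2 := ⟨x - 2, by linarith, by ring⟩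
  obtain ⟨z, hz, rfl⟩ := exists_eq_neg_div hl hl'
  have h3 : 2 * (-z / (2 * (1 + z))) + 3 = (3 + 2 * z) / (1 + z) := by
    field_simp
    ring
  unfold frobIncr
  rw [h3]
  field_simp
  rw [← sub_nonneg]
  ring_nf
  positivity

lemma frobIncr_le_of_nonpos {lam x : ℝ} (hl : -(1 / 2) < lam) (hl' : lam ≤ 0) (hx : 2 ≤ x) :
    frobIncr lam x ≤ (x + lam + 2) ^ 8 - (x - 2 + lam + 2) ^ 8 := by
  obtain ⟨w, hw, rfl⟩ : ∃ w : ℝ, 0 ≤ w ∧ x = w + 2 := ⟨x - 2, by linarith, by ring⟩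
  obtain ⟨z, hz, rfl⟩ := exists_eq_neg_div hl hl'
  have h3 : 2 * (-z / (2 * (1 + z))) + 3 = (3 + 2 * z) / (1 + z) := by
    field_simp
    ring
  unfold frobIncr
  rw [h3]
  field_simp
  rw [← sub_nonneg]
  ring_nf
  positivity

lemma frobIncr_sum_bounds_of_nonneg {lam e : ℝ} (hl : 0 ≤ lam) (he : e = 1 ∨ e = 2) (m : ℕ) :
    (2 * m + e + 8) * (2 * m + e) ^ 3 * (2 * m + e + lam) ^ 2 * (2 * m + e + 2 * lam) ^ 2 ≤
        ∑ j ∈ range (m + 1), frobIncr lam (2 * j + e) ∧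
      ∑ j ∈ range (m + 1), frobIncr lam (2 * j + e) ≤
        (2 * m + e + 2 * lam + 2) ^ 8 := by
  refine sum_range_bounds
    (L := fun x => (x + 8) * x ^ 3 * (x + lam) ^ 2 * (x + 2 * lam) ^ 2)
    (U := fun x => (x + 2 * lam + 2) ^ 8) (g := frobIncr lam) (e := e)
    (by rcases he with rfl | rfl <;> norm_num) ?_ ?_
    (fun x hx => le_frobIncr_of_nonneg hl (by linarith))
    (fun x hx => frobIncr_le_of_nonneg hl (by linarith)) m
  all_goals
    rcases he with rfl | rfl <;> unfold frobIncr <;> rw [← sub_nonneg] <;> ring_nf <;> positivity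

lemma frobIncr_sum_bounds_of_nonpos {lam e : ℝ} (hl : -(1 / 2) < lam) (hl' : lam ≤ 0)
    (he : e = 1 ∨ e = 2) (m : ℕ) :
    (2 * m + e + 2 * lam + 8) * (2 * m + e) ^ 2 * (2 * m + e + lam) ^ 2 *
          (2 * m + e + 2 * lam) ^ 3 ≤
        ∑ j ∈ range (m + 1), frobIncr lam (2 * j + e) ∧
      ∑ j ∈ range (m + 1), frobIncr lam (2 * j + e) ≤
        (2 * m + e + lam + 2) ^ 8 := by
  refine sum_range_bounds
    (L := fun x => (x + 2 * lam + 8) * x ^ 2 * (x + lam) ^ 2 * (x + 2 * lam) ^ 3)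
    (U := fun x => (x + lam + 2) ^ 8) (g := frobIncr lam) (e := e)
    (by rcases he with rfl | rfl <;> norm_num) ?_ ?_
    (fun x hx => le_frobIncr_of_nonpos hl hl' (by linarith))
    (fun x hx => frobIncr_le_of_nonpos hl hl' (by linarith)) m
  all_goals
    obtain ⟨z, hz, rfl⟩ := exists_eq_neg_div hl hl'
    rcases he with rfl | rfl <;> unfold frobIncr <;> norm_num <;> field_simp <;>
      rw [← sub_nonneg] <;> ring_nf <;> positivity

lemma one_div_sqrt_hsq_sq {lam x : ℝ} (hl : -(1 / 2) < lam) (hx : 1 ≤ x) :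
    (1 / Real.sqrt (hsq lam x)) ^ 2 = 1 / hsq lam x := by
  rw [div_pow, one_pow, Real.sq_sqrt (hsq_nonneg hl hx)]

/-- The Frobenius norm of `B_n` as a sum of increments. -/
lemma exists_frobSq_Bmat {lam : ℝ} (hl : -(1 / 2) < lam) {n : ℕ} (hn : 1 ≤ n) :
    ∃ (e : ℝ) (m : ℕ), (e = 1 ∨ e = 2) ∧ (n : ℝ) = 2 * m + e ∧
      4 * (2 * lam + 1) ^ 2 * (2 * lam + 5) * frobSq (Bmat lam n) =
        ∑ j ∈ range (m + 1), frobIncr lam (2 * j + e) := by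
  rcases Nat.even_or_odd' n with ⟨k, rfl | rfl⟩
  · obtain ⟨m, rfl⟩ : ∃ m, k = m + 1 := ⟨k - 1, by omega⟩
    refine ⟨2, m, Or.inr rfl, by push_cast; ring, ?_⟩
    rw [Bmat, if_pos (by omega), show (2 * (m + 1) + 1) / 2 = m + 1 by omega]
    rw [← frobSq_minKernel (S := fun k => ∑ i ∈ Icc 1 (k + 1), gegAlpha lam i ^ 2)
      (β := fun k => gegBeta lam (k + 1)) hl (Or.inr rfl) (sum_gegAlpha hl)]
    · congr 3
      ext k j
      simp only [Amat, minKernel, min_add_add_right]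
    · intro k
      have hk : (0 : ℝ) ≤ k := k.cast_nonneg
      simp only [gegBeta, Nat.cast_add, Nat.cast_one]
      rw [show 2 * ((k : ℝ) + 1) = 2 * k + 2 by ring, one_div_sqrt_hsq_sq hl (by linarith)]
  · refine ⟨1, k, Or.inl rfl, by push_cast; ring, ?_⟩
    rw [Bmat, if_neg (by omega), show (2 * k + 1 + 1) / 2 = k + 1 by omega]
    rw [← frobSq_minKernel (S := fun k => ∑ i ∈ Icc 1 (k + 1), gegAlphaTildeSq lam i)
      (β := fun k => gegBetaTilde lam (k + 1)) hl (Or.inl rfl) (sum_gegAlphaTildeSq hl)]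
    · congr 3
      ext k j
      simp only [AmatTilde, minKernel, min_add_add_right]
    · intro k
      have hk : (0 : ℝ) ≤ k := k.cast_nonneg
      simp only [gegBetaTilde, Nat.cast_add, Nat.cast_one]
      rw [show 2 * ((k : ℝ) + 1) - 1 = 2 * k + 1 by ring, one_div_sqrt_hsq_sq hl (by linarith)]

theorem Bmat_frobenius_bounds (lam : ℝ) (n : ℕ) (hn : 1 ≤ n) :
    (0 ≤ lam →
      1/(4*(2*lam + 1)^2*(2*lam + 5)) *
          (((n : ℝ) + 8) * (n : ℝ)^3 * ((n : ℝ) + lam)^2 * ((n : ℝ) + 2*lam)^2)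
        ≤ frobSq (Bmat lam n) ∧
      frobSq (Bmat lam n) ≤ 1/(4*(2*lam + 1)^2*(2*lam + 5)) * ((n : ℝ) + 2*lam + 2)^8) ∧
    (-(1/2 : ℝ) < lam → lam ≤ 0 →
      1/(4*(2*lam + 1)^2*(2*lam + 5)) *
          (((n : ℝ) + 2*lam + 8) * (n : ℝ)^2 * ((n : ℝ) + lam)^2 * ((n : ℝ) + 2*lam)^3)
        ≤ frobSq (Bmat lam n) ∧
      frobSq (Bmat lam n) ≤ 1/(4*(2*lam + 1)^2*(2*lam + 5)) * ((n : ℝ) + lam + 2)^8) := by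
  have hc (l : ℝ) (hl : -(1 / 2) < l) : 0 < 4 * (2 * l + 1) ^ 2 * (2 * l + 5) := by
    have h1 : 0 < 2 * l + 1 := by linarith
    have h2 : 0 < 2 * l + 5 := by linarith
    positivity
  refine ⟨fun hl => ?_, fun hl hl' => ?_⟩
  · have hl₀ : -(1 / 2) < lam := by linarith
    obtain ⟨e, m, he, hnm, hF⟩ := exists_frobSq_Bmat hl₀ hn
    have h := frobIncr_sum_bounds_of_nonneg hl he m
    rw [← hF, ← hnm] at h
    rw [one_div_mul_eq_div, one_div_mul_eq_div, div_le_iff₀' (hc lam hl₀),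
      le_div_iff₀' (hc lam hl₀)]
    exact h
  · obtain ⟨e, m, he, hnm, hF⟩ := exists_frobSq_Bmat hl hn
    have h := frobIncr_sum_bounds_of_nonpos hl hl' he m
    rw [← hF, ← hnm] at h
    rw [one_div_mul_eq_div, one_div_mul_eq_div, div_le_iff₀' (hc lam hl),
      le_div_iff₀' (hc lam hl)]
    exact h
end

section
/- Let λ be a real number with λ > -1/2 and let n ≥ 1 be a natural number. Then the best Markov constant satisfies (c_n(λ))² ≥ (2/(2λ+1))·n(n+λ)(n+2λ). -/
open Polynomial Filter

/-- The weighted `L_2` norm with the Gegenbauer weight `w_lam(t) = (1-t^2)^(lam-1/2)`. -/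
noncomputable def gegNorm (lam : ℝ) (f : ℝ → ℝ) : ℝ :=
  (∫ x in (-1:ℝ)..1, (f x) ^ 2 * (1 - x ^ 2) ^ (lam - 1/2)) ^ ((1:ℝ)/2)

/-- The best Markov constant `c_n(lam)` in `‖p'‖ ≤ c_n(lam) ‖p‖` for polynomials of degree ≤ n. -/
noncomputable def markovConst (lam : ℝ) (n : ℕ) : ℝ :=
  sSup { r : ℝ | ∃ p : Polynomial ℝ, p ≠ 0 ∧ p.natDegree ≤ n ∧
    r = gegNorm lam (fun x => (Polynomial.derivative p).eval x) /
        gegNorm lam (fun x => p.eval x) }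

namespace Gegenbauer

open MeasureTheory Set

/-- The Gegenbauer weight is integrable on `[-1, 1]`. -/
lemma intervalIntegrable_weight {lam : ℝ} (hlam : -(1/2 : ℝ) < lam) :
    IntervalIntegrable (fun x : ℝ => (1 - x ^ 2) ^ (lam - 1/2)) volume (-1) 1 := by
  have hr : -1 < lam - 1/2 := by linarith
  have right : IntervalIntegrable (fun x : ℝ => (1 - x ^ 2) ^ (lam - 1/2)) volume 0 1 := by
    have h0 : IntervalIntegrable (fun x : ℝ => x ^ (lam - 1/2)) volume 1 0 :=
      intervalIntegral.intervalIntegrable_rpow' hr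
    have h1 : IntervalIntegrable (fun x : ℝ => (1 - x) ^ (lam - 1/2)) volume 0 1 := by
      simpa using h0.comp_sub_left 1
    have hc : ContinuousOn (fun x : ℝ => (1 + x) ^ (lam - 1/2)) (uIcc 0 1) := by
      refine ContinuousOn.rpow_const (by fun_prop) fun x hx => Or.inl ?_
      rw [uIcc_of_le zero_le_one] at hx
      linarith [hx.1]
    refine (h1.mul_continuousOn hc).congr fun x hx => ?_
    rw [uIoc_of_le zero_le_one] at hx
    change (1 - x) ^ (lam - 1/2) * (1 + x) ^ (lam - 1/2) = _
    rw [← Real.mul_rpow (by linarith [hx.2]) (by linarith [hx.1])]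
    ring_nf
  have left : IntervalIntegrable (fun x : ℝ => (1 - x ^ 2) ^ (lam - 1/2)) volume (-1) 0 := by
    simpa using (right.comp_sub_left 0).symm
  exact left.trans right

lemma intervalIntegrable_eval_mul_weight {lam : ℝ} (hlam : -(1/2 : ℝ) < lam) (p : ℝ[X]) :
    IntervalIntegrable (fun x : ℝ => p.eval x * (1 - x ^ 2) ^ (lam - 1/2)) volume (-1) 1 :=
  (intervalIntegrable_weight hlam).continuousOn_mul p.continuous.continuousOn

/-- Integration of polynomials against the Gegenbauer weight. -/
noncomputable def moment {lam : ℝ} (hlam : -(1/2 : ℝ) < lam) : ℝ[X] →ₗ[ℝ] ℝ where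
  toFun p := ∫ x in (-1:ℝ)..1, p.eval x * (1 - x ^ 2) ^ (lam - 1/2)
  map_add' p q := by
    rw [← intervalIntegral.integral_add (intervalIntegrable_eval_mul_weight hlam p)
      (intervalIntegrable_eval_mul_weight hlam q)]
    simp [add_mul]
  map_smul' c p := by
    simp [mul_assoc]

lemma moment_mul_self_nonneg {lam : ℝ} (hlam : -(1/2 : ℝ) < lam) (p : ℝ[X]) :
    0 ≤ moment hlam (p * p) := by
  refine intervalIntegral.integral_nonneg (by norm_num) fun x hx => ?_
  rw [eval_mul]
  exact mul_nonneg (mul_self_nonneg _) (Real.rpow_nonneg (by nlinarith [hx.1, hx.2]) _)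

lemma moment_mul_self_pos {lam : ℝ} (hlam : -(1/2 : ℝ) < lam) {p : ℝ[X]} (hp : p ≠ 0) :
    0 < moment hlam (p * p) := by
  have hnn : ∀ᵐ x ∂volume.restrict (Ioc (-1:ℝ) 1),
      0 ≤ (p * p).eval x * (1 - x ^ 2) ^ (lam - 1/2) := by
    refine (ae_restrict_iff' measurableSet_Ioc).2 (.of_forall fun x hx => ?_)
    rw [eval_mul]
    exact mul_nonneg (mul_self_nonneg _) (Real.rpow_nonneg (by nlinarith [hx.1, hx.2]) _)
  refine (intervalIntegral.integral_pos_iff_support_of_nonneg_ae' (by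
    rwa [uIoc_of_le (by norm_num)]) (intervalIntegrable_eval_mul_weight hlam _)).2
      ⟨by norm_num, ?_⟩
  have hsub : Ioo (-1:ℝ) 1 \ (p.roots.toFinset : Set ℝ) ⊆
      Function.support (fun x => (p * p).eval x * (1 - x ^ 2) ^ (lam - 1/2)) ∩ Ioc (-1) 1 := by
    rintro x ⟨hx, hroot⟩
    refine ⟨?_, hx.1, hx.2.le⟩
    have hx0 : p.eval x ≠ 0 := by simpa [hp] using hroot
    have hw : 0 < (1 - x ^ 2) ^ (lam - 1/2) := Real.rpow_pos_of_pos (by nlinarith [hx.1, hx.2]) _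
    rw [Function.mem_support, eval_mul]
    exact mul_ne_zero (mul_ne_zero hx0 hx0) hw.ne'
  refine lt_of_lt_of_le ?_ (measure_mono hsub)
  rw [measure_sdiff_null (p.roots.toFinset.finite_toSet.measure_zero _), Real.volume_Ioo]
  norm_num

/-- Integration by parts: `(q (1 - x²) w)' = ((1 - x²) q' - (2 lam + 1) x q) w`. -/
lemma moment_pearson {lam : ℝ} (hlam : -(1/2 : ℝ) < lam) (q : ℝ[X]) :
    moment hlam (derivative q * (1 - X ^ 2) - (2 * lam + 1) • (X * q)) = 0 := by
  have hderiv : ∀ x ∈ Ioo (-1:ℝ) 1, HasDerivAt (fun x => q.eval x * (1 - x ^ 2) ^ (lam + 1/2))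
      ((derivative q * (1 - X ^ 2) - (2 * lam + 1) • (X * q)).eval x *
        (1 - x ^ 2) ^ (lam - 1/2)) x := by
    intro x hx
    have hpos : 0 < 1 - x ^ 2 := by nlinarith [hx.1, hx.2]
    have h1 : HasDerivAt (fun x : ℝ => 1 - x ^ 2) (-(2 * x)) x := by
      simpa using (hasDerivAt_pow 2 x).const_sub 1
    have h2 := (q.hasDerivAt x).mul (h1.rpow_const (p := lam + 1/2) (Or.inl hpos.ne'))
    refine h2.congr_deriv ?_
    have e1 : lam + 1/2 - 1 = lam - 1/2 := by ring
    have e2 : (1 - x ^ 2) ^ (lam + 1/2) = (1 - x ^ 2) ^ (lam - 1/2) * (1 - x ^ 2) := by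
      rw [← Real.rpow_add_one hpos.ne']
      ring_nf
    rw [e1, e2]
    simp only [eval_sub, eval_mul, eval_smul, eval_one, eval_pow, eval_X, smul_eq_mul]
    ring
  have hcont : ContinuousOn (fun x => q.eval x * (1 - x ^ 2) ^ (lam + 1/2)) (Icc (-1) 1) :=
    q.continuous.continuousOn.mul
      (ContinuousOn.rpow_const (by fun_prop) fun x _ => Or.inr (by linarith))
  have h := intervalIntegral.integral_eq_sub_of_hasDerivAt_of_le (by norm_num) hcont hderiv
    (intervalIntegrable_eval_mul_weight hlam _)
  have h0 : lam + 1/2 ≠ 0 := by linarith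
  refine h.trans ?_
  norm_num [Real.zero_rpow, h0]

/-- The inner product on polynomials given by the Gegenbauer weight. -/
@[reducible]
noncomputable def innerCore {lam : ℝ} (hlam : -(1/2 : ℝ) < lam) :
    InnerProductSpace.Core ℝ ℝ[X] where
  inner p q := moment hlam (p * q)
  conj_inner_symm p q := by simp [mul_comm]
  re_inner_nonneg p := moment_mul_self_nonneg hlam p
  add_left p q r := by simp [add_mul]
  smul_left p q c := by simp
  definite p hp := by
    by_contra h
    exact (moment_mul_self_pos hlam h).ne' hp

lemma exists_moment_derivative_le {lam : ℝ} (hlam : -(1/2 : ℝ) < lam) (n : ℕ) :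
    ∃ K : ℝ, ∀ p : ℝ[X], p.natDegree ≤ n →
      moment hlam (derivative p * derivative p) ≤ K ^ 2 * moment hlam (p * p) := by
  let _ : NormedAddCommGroup ℝ[X] := (innerCore hlam).toNormedAddCommGroup
  let _ : InnerProductSpace ℝ ℝ[X] := InnerProductSpace.ofCore (innerCore hlam).toCore
  have hnorm (p : ℝ[X]) : ‖p‖ ^ 2 = moment hlam (p * p) := (real_inner_self_eq_norm_sq p).symm
  let D := ((derivative (R := ℝ)).comp (degreeLT ℝ (n + 1)).subtype).toContinuousLinearMap
  refine ⟨‖D‖, fun p hp => ?_⟩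
  have hmem : p ∈ degreeLT ℝ (n + 1) := by
    rw [mem_degreeLT]
    exact lt_of_le_of_lt (degree_le_of_natDegree_le hp) (by exact_mod_cast n.lt_succ_self)
  have h : ‖derivative p‖ ≤ ‖D‖ * ‖p‖ := D.le_opNorm ⟨p, hmem⟩
  rw [← hnorm, ← hnorm, ← mul_pow]
  gcongr

lemma exists_monic_orthogonal {lam : ℝ} (hlam : -(1/2 : ℝ) < lam) (n : ℕ) :
    ∃ y : ℝ[X], y.Monic ∧ y.natDegree = n ∧
      ∀ q : ℝ[X], q.degree < n → moment hlam (y * q) = 0 := by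
  let _ : NormedAddCommGroup ℝ[X] := (innerCore hlam).toNormedAddCommGroup
  let _ : InnerProductSpace ℝ ℝ[X] := InnerProductSpace.ofCore (innerCore hlam).toCore
  let r : ℝ[X] := (degreeLT ℝ n).starProjection (X ^ n)
  have hr : r.degree < n := mem_degreeLT.1 (Submodule.starProjection_apply_mem _ _)
  refine ⟨X ^ n - r, monic_X_pow_sub hr, ?_, fun q hq => ?_⟩
  · refine natDegree_eq_of_degree_eq_some ?_
    rw [degree_sub_eq_left_of_degree_lt (by rwa [degree_X_pow]), degree_X_pow]
  · exact Submodule.starProjection_inner_eq_zero (K := degreeLT ℝ n) (X ^ n) q (mem_degreeLT.2 hq)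

lemma moment_mul_of_natDegree_le {lam : ℝ} (hlam : -(1/2 : ℝ) < lam) {n : ℕ} {y : ℝ[X]}
    (hy : y.Monic) (hdeg : y.natDegree = n)
    (horth : ∀ q : ℝ[X], q.degree < n → moment hlam (y * q) = 0)
    {q : ℝ[X]} (hq : q.natDegree ≤ n) :
    moment hlam (y * q) = q.coeff n * moment hlam (y * y) := by
  have hyn : y.coeff n = 1 := hdeg ▸ hy.coeff_natDegree
  have h := horth (q - q.coeff n • y) <| (degree_lt_iff_coeff_zero _ _).2 fun m hm => by
    rcases hm.eq_or_lt with rfl | hm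
    · simp [hyn]
    · simp [coeff_eq_zero_of_natDegree_lt (hq.trans_lt hm),
        coeff_eq_zero_of_natDegree_lt (hdeg.trans_lt hm)]
  rw [mul_sub, mul_smul_comm, map_sub, map_smul, smul_eq_mul] at h
  linarith

lemma coeff_X_mul_derivative (p : ℝ[X]) (m : ℕ) :
    (X * derivative p).coeff m = m * p.coeff m := by
  cases m with
  | zero => simp
  | succ k =>
    rw [coeff_X_mul, coeff_derivative]
    push_cast
    ring

lemma coeff_X_sq_mul_derivative_derivative (p : ℝ[X]) (m : ℕ) :
    (X ^ 2 * derivative (derivative p)).coeff m = m * (m - 1) * p.coeff m := by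
  have h : X ^ 2 * derivative (derivative p) =
      X * derivative (X * derivative p) - X * derivative p := by
    simp only [derivative_mul, derivative_X]
    ring
  rw [h, coeff_sub]
  simp only [coeff_X_mul_derivative]
  ring

/-- The squared norm of the derivative of the monic orthogonal polynomial of degree `n`. -/
lemma moment_derivative_orthogonal {lam : ℝ} (hlam : -(1/2 : ℝ) < lam) {n : ℕ} {y : ℝ[X]}
    (hy : y.Monic) (hdeg : y.natDegree = n)
    (horth : ∀ q : ℝ[X], q.degree < n → moment hlam (y * q) = 0) :
    moment hlam (derivative y * derivative y) =
      2/(2*lam + 1) * ((n : ℝ) * ((n : ℝ) + lam) * ((n : ℝ) + 2*lam)) * moment hlam (y * y) := by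
  have hyn : y.coeff n = 1 := hdeg ▸ hy.coeff_natDegree
  have hyz : ∀ m, n < m → y.coeff m = 0 := fun m hm =>
    coeff_eq_zero_of_natDegree_lt (hdeg.trans_lt hm)
  have hyz2 : y.coeff (n + 2) = 0 := hyz _ (by omega)
  set z := derivative y with hz
  set u := derivative z with hu
  have hcu (m : ℕ) : u.coeff m = y.coeff (m + 2) * (m + 2) * (m + 1) := by
    rw [hu, hz, coeff_derivative, coeff_derivative]
    push_cast
    ring
  have hq1 (m : ℕ) : (u * (1 - X ^ 2) - (2 * lam + 1) • (X * z)).coeff m =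
      y.coeff (m + 2) * (m + 2) * (m + 1) - m * (m + 2 * lam) * y.coeff m := by
    have e : u * (1 - X ^ 2) - (2 * lam + 1) • (X * z) =
        u - X ^ 2 * u - (2 * lam + 1) • (X * z) := by ring
    rw [e, coeff_sub, coeff_sub, coeff_smul, hcu, hu, hz, coeff_X_sq_mul_derivative_derivative,
      coeff_X_mul_derivative, smul_eq_mul]
    ring
  have hq2 (m : ℕ) :
      (derivative (X * u) * (1 - X ^ 2) - (2 * lam + 1) • (X ^ 2 * u)).coeff m =
      y.coeff (m + 2) * (m + 2) * (m + 1) ^ 2 - m * (m - 1) * (m + 2 * lam) * y.coeff m := by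
    have e : derivative (X * u) * (1 - X ^ 2) - (2 * lam + 1) • (X ^ 2 * u) =
        u + X * derivative u - (X ^ 2 * derivative (derivative (X * z)) - X ^ 2 * u)
          - (2 * lam + 1) • (X ^ 2 * u) := by
      simp only [derivative_mul, derivative_X, derivative_add, derivative_one, ← hu, smul_eq_C_mul]
      ring
    simp only [e, coeff_sub, coeff_add, coeff_smul, coeff_X_sq_mul_derivative_derivative,
      coeff_X_mul_derivative, smul_eq_mul, hcu]
    rw [hu, hz, coeff_X_sq_mul_derivative_derivative, coeff_X_mul_derivative]
    ring
  have m1 := moment_mul_of_natDegree_le hlam hy hdeg horth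
    (q := u * (1 - X ^ 2) - (2 * lam + 1) • (X * z))
    (natDegree_le_iff_coeff_eq_zero.2 fun m hm => by
      rw [hq1, hyz m hm, hyz (m + 2) (by omega)]; ring)
  have m2 := moment_mul_of_natDegree_le hlam hy hdeg horth
    (q := derivative (X * u) * (1 - X ^ 2) - (2 * lam + 1) • (X ^ 2 * u))
    (natDegree_le_iff_coeff_eq_zero.2 fun m hm => by
      rw [hq2, hyz m hm, hyz (m + 2) (by omega)]; ring)
  rw [hq1, hyn, hyz2] at m1
  rw [hq2, hyn, hyz2] at m2
  have p1 := moment_pearson hlam (y * z)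
  have p2 := moment_pearson hlam (y * (X * u))
  have p3 := moment_pearson hlam (X * (z * z))
  have e1 : derivative (y * z) * (1 - X ^ 2) - (2 * lam + 1) • (X * (y * z)) =
      (z * z - X ^ 2 * (z * z)) + y * (u * (1 - X ^ 2) - (2 * lam + 1) • (X * z)) := by
    simp only [derivative_mul, ← hz, ← hu, smul_eq_C_mul]
    ring
  have e2 : derivative (y * (X * u)) * (1 - X ^ 2) - (2 * lam + 1) • (X * (y * (X * u))) =
      X * z * u * (1 - X ^ 2) +
        y * (derivative (X * u) * (1 - X ^ 2) - (2 * lam + 1) • (X ^ 2 * u)) := by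
    rw [derivative_mul, ← hz, smul_eq_C_mul, smul_eq_C_mul]
    ring
  have e3 : derivative (X * (z * z)) * (1 - X ^ 2) - (2 * lam + 1) • (X * (X * (z * z))) =
      (z * z - X ^ 2 * (z * z)) + (2 : ℝ) • (X * z * u * (1 - X ^ 2)) -
        (2 * lam + 1) • (X ^ 2 * (z * z)) := by
    simp only [derivative_mul, derivative_X, ← hu, two_smul, smul_eq_C_mul]
    ring
  rw [e1, map_add, m1, map_sub] at p1
  rw [e2, map_add, m2] at p2
  rw [e3, map_sub, map_add, map_smul, map_smul, map_sub, smul_eq_mul, smul_eq_mul] at p3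
  have h0 : 2 * lam + 1 ≠ 0 := by linarith
  field_simp
  linear_combination (2 * lam + 2) * p1 - p3 + 2 * p2

lemma gegNorm_eq_sqrt_moment {lam : ℝ} (hlam : -(1/2 : ℝ) < lam) (p : ℝ[X]) :
    gegNorm lam (fun x => p.eval x) = √(moment hlam (p * p)) := by
  rw [gegNorm, Real.sqrt_eq_rpow]
  simp [moment, sq]

end Gegenbauer

open Gegenbauer in
theorem markov_lower_bound_diagonal (lam : ℝ) (hlam : -(1/2 : ℝ) < lam) (n : ℕ) (hn : 1 ≤ n) :
    2/(2*lam + 1) * ((n : ℝ) * ((n : ℝ) + lam) * ((n : ℝ) + 2*lam)) ≤ (markovConst lam n)^2 := by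
  obtain ⟨y, hy, hdeg, horth⟩ := exists_monic_orthogonal hlam n
  obtain ⟨K, hK⟩ := exists_moment_derivative_le hlam n
  have hpos := moment_mul_self_pos hlam hy.ne_zero
  have hle : √(moment hlam (derivative y * derivative y)) / √(moment hlam (y * y)) ≤
      markovConst lam n := by
    refine le_csSup ⟨|K|, ?_⟩ ⟨y, hy.ne_zero, hdeg.le, ?_⟩
    · rintro _ ⟨p, hp, hpn, rfl⟩
      rw [gegNorm_eq_sqrt_moment hlam, gegNorm_eq_sqrt_moment hlam,
        div_le_iff₀ (Real.sqrt_pos.2 (moment_mul_self_pos hlam hp)), ← Real.sqrt_sq_eq_abs,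
        ← Real.sqrt_mul (sq_nonneg K)]
      exact Real.sqrt_le_sqrt (hK p hpn)
    · rw [gegNorm_eq_sqrt_moment hlam, gegNorm_eq_sqrt_moment hlam]
  refine le_trans (le_of_eq ?_) (pow_le_pow_left₀ (by positivity) hle 2)
  rw [div_pow, Real.sq_sqrt (moment_mul_self_nonneg hlam _), Real.sq_sqrt hpos.le,
    moment_derivative_orthogonal hlam hy hdeg horth, mul_div_cancel_right₀ _ hpos.ne']
end

section
/- Let λ be a real number with λ > 2, let n be a natural number with n ≥ 3, and set F(n,λ) = n(n+λ)(n+2λ)(n+3λ)/((λ+1)(λ+2)). Then (1/8)·F(n,λ) ≤ (c_n(λ))² ≤ F(n,λ). -/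
open Polynomial Filter

lemma continuous_eval_mul_gegWeight {lam : ℝ} (hlam : 1/2 ≤ lam) (p : ℝ[X]) :
    Continuous fun x : ℝ => p.eval x * (1 - x ^ 2) ^ (lam - 1/2) :=
  p.continuous.mul
    (Continuous.rpow_const (by fun_prop) fun _ => Or.inr (by linarith))

/-- Integration of polynomials against the Gegenbauer weight. -/
noncomputable def gegFunctional (lam : ℝ) (hlam : 1/2 ≤ lam) : ℝ[X] →ₗ[ℝ] ℝ where
  toFun p := ∫ x in (-1:ℝ)..1, p.eval x * (1 - x ^ 2) ^ (lam - 1/2)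
  map_add' p q := by
    simp only [eval_add, add_mul]
    exact intervalIntegral.integral_add
      ((continuous_eval_mul_gegWeight hlam p).intervalIntegrable _ _)
      ((continuous_eval_mul_gegWeight hlam q).intervalIntegrable _ _)
  map_smul' c p := by
    simp only [eval_smul, smul_eq_mul, mul_assoc, RingHom.id_apply]
    exact intervalIntegral.integral_const_mul _ _

lemma gegFunctional_apply {lam : ℝ} (hlam : 1/2 ≤ lam) (p : ℝ[X]) :
    gegFunctional lam hlam p = ∫ x in (-1:ℝ)..1, p.eval x * (1 - x ^ 2) ^ (lam - 1/2) := rfl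

lemma gegFunctional_C_mul {lam : ℝ} (hlam : 1/2 ≤ lam) (c : ℝ) (p : ℝ[X]) :
    gegFunctional lam hlam (C c * p) = c * gegFunctional lam hlam p := by
  rw [← smul_eq_C_mul, map_smul, smul_eq_mul]

/-- Integration by parts: the derivative of `p * (1 - x^2)^(lam + 1/2)` has integral zero. -/
lemma gegFunctional_parts {lam : ℝ} (hlam : 1/2 ≤ lam) (p : ℝ[X]) :
    gegFunctional lam hlam
      ((1 - X ^ 2) * derivative p - C (2 * lam + 1) * X * p) = 0 := by
  rw [gegFunctional_apply]
  have hd : ∀ x ∈ Set.uIcc (-1:ℝ) 1, HasDerivAt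
      (fun x : ℝ => p.eval x * (1 - x ^ 2) ^ (lam + 1/2))
      (((1 - X ^ 2) * derivative p - C (2 * lam + 1) * X * p).eval x
        * (1 - x ^ 2) ^ (lam - 1/2)) x := by
    intro x hx
    rw [Set.uIcc_of_le (by norm_num)] at hx
    have h0 : (0:ℝ) ≤ 1 - x ^ 2 := by nlinarith [hx.1, hx.2]
    have h1 : HasDerivAt (fun x : ℝ => 1 - x ^ 2) (-(2 * x)) x := by
      simpa using (hasDerivAt_pow 2 x).const_sub 1
    have h2 := (p.hasDerivAt x).mul
      (h1.rpow_const (p := lam + 1/2) (Or.inr (by linarith)))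
    refine h2.congr_deriv ?_
    have e1 : lam + 1/2 - 1 = lam - 1/2 := by ring
    have e2 : (1 - x ^ 2) ^ (lam + 1/2) = (1 - x ^ 2) ^ (lam - 1/2) * (1 - x ^ 2) := by
      rw [← Real.rpow_add_one' h0 (by linarith)]
      congr 1; ring
    rw [e1, e2]
    simp only [eval_sub, eval_mul, eval_one, eval_pow, eval_X, eval_C]
    ring
  rw [intervalIntegral.integral_eq_sub_of_hasDerivAt hd
    ((continuous_eval_mul_gegWeight hlam _).intervalIntegrable _ _)]
  simp [Real.zero_rpow (show lam + 2⁻¹ ≠ 0 by linarith)]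

lemma gegFunctional_nonneg {lam : ℝ} (hlam : 1/2 ≤ lam) {p : ℝ[X]}
    (hp : ∀ x, 0 ≤ p.eval x) : 0 ≤ gegFunctional lam hlam p := by
  rw [gegFunctional_apply]
  refine intervalIntegral.integral_nonneg (by norm_num) fun x hx => ?_
  have h0 : (0:ℝ) ≤ 1 - x ^ 2 := by nlinarith [hx.1, hx.2]
  exact mul_nonneg (hp x) (Real.rpow_nonneg h0 _)

lemma gegFunctional_pos {lam : ℝ} (hlam : 1/2 ≤ lam) {p : ℝ[X]}
    (hp : ∀ x, 0 ≤ p.eval x) (hp0 : p ≠ 0) : 0 < gegFunctional lam hlam p := by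
  obtain ⟨c, hc, hpc⟩ : ∃ c ∈ Set.Ioo (-1:ℝ) 1, p.eval c ≠ 0 := by
    by_contra! h
    exact hp0 (eq_zero_of_infinite_isRoot p
      ((Set.Ioo_infinite (by norm_num : (-1:ℝ) < 1)).mono fun x hx => h x hx))
  rw [gegFunctional_apply]
  refine intervalIntegral.integral_pos (by norm_num)
    (continuous_eval_mul_gegWeight hlam p).continuousOn (fun x hx => ?_)
    ⟨c, Set.Ioo_subset_Icc_self hc, ?_⟩
  · have h0 : (0:ℝ) ≤ 1 - x ^ 2 := by nlinarith [hx.1, hx.2]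
    exact mul_nonneg (hp x) (Real.rpow_nonneg h0 _)
  · have h0 : (0:ℝ) < 1 - c ^ 2 := by nlinarith [hc.1, hc.2]
    exact mul_pos ((hp c).lt_of_ne' hpc) (Real.rpow_pos_of_pos h0 _)

lemma gegNorm_sq {lam : ℝ} (hlam : 1/2 ≤ lam) (p : ℝ[X]) :
    gegNorm lam (fun x => p.eval x) ^ 2 = gegFunctional lam hlam (p ^ 2) := by
  have h := gegFunctional_nonneg hlam (p := p ^ 2) fun x => by
    rw [eval_pow]; positivity
  rw [gegFunctional_apply] at h ⊢
  simp only [eval_pow] at h ⊢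
  rw [gegNorm, ← Real.sqrt_eq_rpow, Real.sq_sqrt h]

lemma gegNorm_nonneg (lam : ℝ) (f : ℝ → ℝ) : 0 ≤ gegNorm lam f := by
  rw [gegNorm, ← Real.sqrt_eq_rpow]
  exact Real.sqrt_nonneg _

/-- The differential operator whose eigenpolynomials are the Gegenbauer polynomials. -/
noncomputable def gegOp (lam : ℝ) (p : ℝ[X]) : ℝ[X] :=
  C (2 * lam + 1) * X * derivative p - (1 - X ^ 2) * derivative (derivative p)

/-- The eigenvalue of `gegOp lam` on polynomials of degree `k`. -/
def gegEig (lam : ℝ) (k : ℕ) : ℝ := k * (k + 2 * lam)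

lemma gegEig_lt {lam : ℝ} (hlam : 0 ≤ lam) {j k : ℕ} (h : j < k) :
    gegEig lam j < gegEig lam k := by
  have h' : (j : ℝ) < k := by exact_mod_cast h
  have h0 : (0 : ℝ) ≤ j := by positivity
  unfold gegEig
  nlinarith

lemma gegOp_add (lam : ℝ) (p q : ℝ[X]) : gegOp lam (p + q) = gegOp lam p + gegOp lam q := by
  simp only [gegOp, derivative_add]; ring

lemma gegOp_C_mul (lam c : ℝ) (p : ℝ[X]) : gegOp lam (C c * p) = C c * gegOp lam p := by
  simp only [gegOp, derivative_C_mul]; ring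

lemma degree_gegOp_X_pow_sub_lt (lam : ℝ) (k : ℕ) :
    (gegOp lam (X ^ k) - C (gegEig lam k) * X ^ k).degree < (k : WithBot ℕ) := by
  match k with
  | 0 => simp [gegOp, gegEig]
  | 1 =>
    have : gegOp lam (X ^ 1) - C (gegEig lam 1) * X ^ 1 = 0 := by
      simp [gegOp, gegEig]; ring
    rw [this]; simp
  | k + 2 =>
    have : gegOp lam (X ^ (k + 2)) - C (gegEig lam (k + 2)) * X ^ (k + 2)
        = C (-(((k : ℝ) + 2) * (k + 1))) * X ^ k := by
      simp [gegOp, gegEig, C_ofNat]; ring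
    rw [this]
    refine (degree_C_mul_X_pow_le _ _).trans_lt ?_
    exact_mod_cast (by omega : k < k + 2)

lemma degree_sub_coeff_mul_lt {p q : ℝ[X]} {j : ℕ} (hp : p.degree < (j + 1 : ℕ))
    (hq : q.Monic) (hqj : q.natDegree = j) : (p - C (p.coeff j) * q).degree < (j : WithBot ℕ) := by
  rw [degree_lt_iff_coeff_zero] at hp ⊢
  intro m hm
  rcases hm.eq_or_lt with rfl | hm
  · have : q.coeff j = 1 := by rw [← hqj]; exact hq
    simp [this]
  · simp [hp m hm, coeff_eq_zero_of_natDegree_lt (hqj.trans_lt hm)]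

lemma exists_gegOp_sub_eq {lam : ℝ} (hlam : 0 ≤ lam) (k : ℕ) :
    ∀ j ≤ k, ∀ g : ℝ[X], g.degree < j →
      ∃ r : ℝ[X], r.degree < j ∧ gegOp lam r - C (gegEig lam k) * r = g := by
  intro j
  induction j with
  | zero =>
    intro _ g hg
    refine ⟨0, by simp, ?_⟩
    have : g = 0 := by simpa using hg
    simp [gegOp, this]
  | succ j ih =>
    intro hj g hg
    have hδ : gegEig lam j - gegEig lam k ≠ 0 := (sub_neg.2 (gegEig_lt hlam hj)).ne
    set c := g.coeff j / (gegEig lam j - gegEig lam k) with hc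
    have hlow : (g - (gegOp lam (C c * X ^ j) - C (gegEig lam k) * (C c * X ^ j))).degree <
        (j : WithBot ℕ) := by
      have e : g - (gegOp lam (C c * X ^ j) - C (gegEig lam k) * (C c * X ^ j))
          = (g - C (g.coeff j) * X ^ j)
            - C c * (gegOp lam (X ^ j) - C (gegEig lam j) * X ^ j) := by
        have : C (g.coeff j) = C c * (C (gegEig lam j) - C (gegEig lam k)) := by
          rw [← C_sub, ← C_mul, hc, div_mul_cancel₀ _ hδ]
        rw [gegOp_C_mul, this]; ring
      rw [e]
      refine (degree_sub_le _ _).trans_lt (max_lt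
        (degree_sub_coeff_mul_lt hg (monic_X_pow j) (natDegree_X_pow j)) ?_)
      rw [← smul_eq_C_mul]
      exact (degree_smul_le _ _).trans_lt (degree_gegOp_X_pow_sub_lt lam j)
    obtain ⟨r, hr, hrg⟩ := ih (by omega) _ hlow
    refine ⟨C c * X ^ j + r, ?_, ?_⟩
    · have hjj : (j : WithBot ℕ) < (j + 1 : ℕ) := by exact_mod_cast Nat.lt_succ_self j
      exact (degree_add_le _ _).trans_lt
        (max_lt ((degree_C_mul_X_pow_le _ _).trans_lt hjj) (hr.trans hjj))
    · rw [gegOp_add]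
      linear_combination hrg

/-- Existence of the monic Gegenbauer polynomial of degree `k`. -/
lemma exists_monic_gegOp_eq {lam : ℝ} (hlam : 0 ≤ lam) (k : ℕ) :
    ∃ y : ℝ[X], y.Monic ∧ y.natDegree = k ∧ gegOp lam y = C (gegEig lam k) * y := by
  obtain ⟨r, hr, hrg⟩ := exists_gegOp_sub_eq hlam k k le_rfl
    (-(gegOp lam (X ^ k) - C (gegEig lam k) * X ^ k))
    (by rw [degree_neg]; exact degree_gegOp_X_pow_sub_lt lam k)
  refine ⟨X ^ k + r, monic_X_pow_add hr, natDegree_eq_of_degree_eq_some ?_, ?_⟩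
  · rw [degree_add_eq_left_of_degree_lt (by rwa [degree_X_pow]), degree_X_pow]
  · rw [gegOp_add]
    linear_combination hrg

/-- The monic Gegenbauer polynomial of degree `k`. -/
noncomputable def monicGeg (lam : ℝ) (hlam : 0 ≤ lam) (k : ℕ) : ℝ[X] :=
  (exists_monic_gegOp_eq hlam k).choose

lemma monic_monicGeg {lam : ℝ} (hlam : 0 ≤ lam) (k : ℕ) : (monicGeg lam hlam k).Monic :=
  (exists_monic_gegOp_eq hlam k).choose_spec.1

lemma natDegree_monicGeg {lam : ℝ} (hlam : 0 ≤ lam) (k : ℕ) :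
    (monicGeg lam hlam k).natDegree = k :=
  (exists_monic_gegOp_eq hlam k).choose_spec.2.1

lemma gegOp_monicGeg {lam : ℝ} (hlam : 0 ≤ lam) (k : ℕ) :
    gegOp lam (monicGeg lam hlam k) = C (gegEig lam k) * monicGeg lam hlam k :=
  (exists_monic_gegOp_eq hlam k).choose_spec.2.2

/-- The operator `gegOp` is symmetric, with energy form `∫ (1 - x^2) p' q' w`. -/
lemma gegFunctional_gegOp_mul {lam : ℝ} (hlam : 1/2 ≤ lam) (p q : ℝ[X]) :
    gegFunctional lam hlam (gegOp lam p * q) =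
      gegFunctional lam hlam ((1 - X ^ 2) * derivative p * derivative q) := by
  have h := gegFunctional_parts hlam (derivative p * q)
  rw [← sub_eq_zero, ← map_sub, ← neg_eq_zero, ← map_neg, ← h]
  congr 1
  rw [derivative_mul, gegOp]
  ring

lemma gegFunctional_energy_monicGeg {lam : ℝ} (hlam : 1/2 ≤ lam) (h0 : 0 ≤ lam) (k : ℕ)
    (q : ℝ[X]) :
    gegFunctional lam hlam ((1 - X ^ 2) * derivative (monicGeg lam h0 k) * derivative q) =
      gegEig lam k * gegFunctional lam hlam (monicGeg lam h0 k * q) := by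
  rw [← gegFunctional_gegOp_mul, gegOp_monicGeg, mul_assoc, gegFunctional_C_mul]

lemma gegFunctional_monicGeg_mul_monicGeg {lam : ℝ} (hlam : 1/2 ≤ lam) (h0 : 0 ≤ lam)
    {j k : ℕ} (h : j < k) :
    gegFunctional lam hlam (monicGeg lam h0 k * monicGeg lam h0 j) = 0 := by
  have h1 := gegFunctional_energy_monicGeg hlam h0 k (monicGeg lam h0 j)
  have h2 := gegFunctional_energy_monicGeg hlam h0 j (monicGeg lam h0 k)
  rw [mul_right_comm, h1, mul_comm (monicGeg lam h0 j)] at h2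
  have h3 := gegEig_lt h0 h
  have h4 : (gegEig lam k - gegEig lam j) *
      gegFunctional lam hlam (monicGeg lam h0 k * monicGeg lam h0 j) = 0 := by
    linear_combination h2
  exact (mul_eq_zero.1 h4).resolve_left (by linarith)

lemma gegFunctional_monicGeg_mul_eq_zero {lam : ℝ} (hlam : 1/2 ≤ lam) (h0 : 0 ≤ lam) (k : ℕ) :
    ∀ j ≤ k, ∀ p : ℝ[X], p.degree < j →
      gegFunctional lam hlam (monicGeg lam h0 k * p) = 0 := by
  intro j
  induction j with
  | zero =>
    intro _ p hp
    have : p = 0 := by simpa using hp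
    simp [this]
  | succ j ih =>
    intro hj p hp
    have h1 := ih (by omega) _
      (degree_sub_coeff_mul_lt hp (monic_monicGeg h0 j) (natDegree_monicGeg h0 j))
    rw [mul_sub, map_sub, mul_left_comm, gegFunctional_C_mul,
      gegFunctional_monicGeg_mul_monicGeg hlam h0 hj] at h1
    simpa using h1

/-- The weighted Bernstein inequality. -/
lemma gegFunctional_energy_le {lam : ℝ} (hlam : 1/2 ≤ lam) (n : ℕ) :
    ∀ p : ℝ[X], p.degree < (n + 1 : ℕ) →
      gegFunctional lam hlam ((1 - X ^ 2) * derivative p ^ 2) ≤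
        gegEig lam n * gegFunctional lam hlam (p ^ 2) := by
  have h0 : 0 ≤ lam := by linarith
  induction n with
  | zero =>
    intro p hp
    have hp' : p.natDegree ≤ 0 := natDegree_le_of_degree_le (by
      rw [degree_lt_iff_coeff_zero] at hp
      rw [degree_le_iff_coeff_zero]
      intro m hm
      exact hp m (by exact_mod_cast hm))
    rw [eq_C_of_natDegree_le_zero hp']
    simp [gegEig]
  | succ n ih =>
    intro p hp
    set y := monicGeg lam h0 (n + 1) with hy
    set c := p.coeff (n + 1) with hc
    have hlow : (p - C c * y).degree < ((n + 1 : ℕ) : WithBot ℕ) :=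
      degree_sub_coeff_mul_lt hp (monic_monicGeg h0 _) (natDegree_monicGeg h0 _)
    set r := p - C c * y with hr
    have hpr : p = C c * y + r := by rw [hr]; ring
    have h1 := ih r hlow
    have h2 := gegFunctional_monicGeg_mul_eq_zero hlam h0 (n + 1) (n + 1) le_rfl r hlow
    have h3 := gegFunctional_energy_monicGeg hlam h0 (n + 1) r
    have h4 := gegFunctional_energy_monicGeg hlam h0 (n + 1) y
    have h5 := gegEig_lt h0 (Nat.lt_succ_self n)
    have h6 : 0 ≤ gegFunctional lam hlam (r ^ 2) :=
      gegFunctional_nonneg hlam fun x => by rw [eval_pow]; positivity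
    rw [← hy] at h2 h3 h4
    have e1 : (1 - X ^ 2) * derivative p ^ 2
        = C (c ^ 2) * ((1 - X ^ 2) * derivative y * derivative y)
          + C (2 * c) * ((1 - X ^ 2) * derivative y * derivative r)
          + (1 - X ^ 2) * derivative r ^ 2 := by
      rw [hpr]; simp [C_ofNat]; ring
    have e2 : p ^ 2 = C (c ^ 2) * (y * y) + C (2 * c) * (y * r) + r ^ 2 := by
      rw [hpr]; simp [C_ofNat]; ring
    rw [e1, e2]
    simp only [map_add, gegFunctional_C_mul, h2, h3, h4]
    nlinarith [mul_le_mul_of_nonneg_right h5.le h6]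

/-- An orthogonal polynomial has no nonconstant factor of constant sign. -/
lemma not_monicGeg_eq_mul_of_nonneg {lam : ℝ} (h0 : 1/2 ≤ lam) (h0' : 0 ≤ lam) {k : ℕ}
    {a s : ℝ[X]} (h : monicGeg lam h0' k = a * s) (ha : 0 < a.natDegree)
    (hpos : ∀ x, 0 ≤ a.eval x) : False := by
  have hne : a * s ≠ 0 := h ▸ (monic_monicGeg h0' k).ne_zero
  have ha0 := left_ne_zero_of_mul hne
  have hs0 := right_ne_zero_of_mul hne
  have hdeg : a.natDegree + s.natDegree = k := by
    rw [← natDegree_mul ha0 hs0, ← h, natDegree_monicGeg]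
  have hz := gegFunctional_monicGeg_mul_eq_zero h0 h0' k k le_rfl s
    (by rw [degree_eq_natDegree hs0]; exact_mod_cast (by omega : s.natDegree < k))
  have hp := gegFunctional_pos h0 (p := monicGeg lam h0' k * s) (fun x => by
    rw [h, eval_mul, eval_mul, mul_assoc]
    exact mul_nonneg (hpos x) (mul_self_nonneg _)) (by rw [h]; exact mul_ne_zero hne hs0)
  exact hp.ne' hz

lemma eval_nonneg_or_nonpos_of_no_root {g : ℝ[X]} (hg : ∀ x, g.eval x ≠ 0) :
    (∀ x, 0 ≤ g.eval x) ∨ ∀ x, g.eval x ≤ 0 := by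
  by_contra! h
  obtain ⟨⟨a, ha⟩, b, hb⟩ := h
  obtain ⟨c, hc⟩ := mem_range_of_exists_le_of_exists_ge g.continuous ⟨a, ha.le⟩ ⟨b, hb.le⟩
  exact hg c hc

lemma splits_monicGeg {lam : ℝ} (hlam : 1/2 ≤ lam) (h0 : 0 ≤ lam) (k : ℕ) :
    (monicGeg lam h0 k).Splits := by
  obtain ⟨u, hu⟩ :=
    UniqueFactorizationMonoid.factors_prod (monic_monicGeg h0 k).ne_zero
  rw [← hu]
  refine (Splits.multisetProd fun g hmem => Splits.of_degree_eq_one ?_).mul u.isUnit.splits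
  have hg := UniqueFactorizationMonoid.irreducible_of_factor g hmem
  obtain ⟨s, hs⟩ := UniqueFactorizationMonoid.dvd_of_mem_factors hmem
  by_cases hroot : ∃ x, g.eval x = 0
  · obtain ⟨x, hx⟩ := hroot
    exact degree_eq_one_of_irreducible_of_root hg hx
  · push Not at hroot
    exfalso
    rcases eval_nonneg_or_nonpos_of_no_root hroot with h | h
    · exact not_monicGeg_eq_mul_of_nonneg hlam h0 hs hg.natDegree_pos h
    · refine not_monicGeg_eq_mul_of_nonneg hlam h0 (a := -g) (s := -s) (by rw [hs]; ring)
        (by rw [natDegree_neg]; exact hg.natDegree_pos) fun x => ?_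
      rw [eval_neg]; linarith [h x]

lemma nodup_roots_monicGeg {lam : ℝ} (hlam : 1/2 ≤ lam) (h0 : 0 ≤ lam) (k : ℕ) :
    (monicGeg lam h0 k).roots.Nodup := by
  rw [Multiset.nodup_iff_count_le_one]
  intro a
  rw [count_roots]
  by_contra! hlt
  obtain ⟨s, hs⟩ := (le_rootMultiplicity_iff (monic_monicGeg h0 k).ne_zero).1 hlt
  refine not_monicGeg_eq_mul_of_nonneg hlam h0 hs ?_ fun x => ?_
  · rw [natDegree_pow, natDegree_X_sub_C]; norm_num
  · rw [eval_pow]; exact sq_nonneg _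

/-- The Laguerre inequality for real-rooted polynomials. -/
lemma Polynomial.Splits.eval_mul_derivative_derivative_le {p : ℝ[X]} (hp : p.Splits) (x : ℝ) :
    p.eval x * (derivative (derivative p)).eval x ≤ (derivative p).eval x ^ 2 := by
  induction hp using Submonoid.closure_induction with
  | mem q hq =>
    rcases hq with ⟨c, rfl⟩ | ⟨c, rfl⟩
    · simp
    · simp
  | one => simp
  | mul p q _ _ hp hq =>
    simp only [derivative_mul, derivative_add, eval_mul, eval_add]
    nlinarith [mul_le_mul_of_nonneg_left hp (sq_nonneg (q.eval x)),
      mul_le_mul_of_nonneg_left hq (sq_nonneg (p.eval x))]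

/-- Bound for the zeros of Gegenbauer polynomials. -/
lemma sq_mul_le_of_isRoot_monicGeg {lam : ℝ} (hlam : 1/2 ≤ lam) (h0 : 0 ≤ lam) {n : ℕ} {x : ℝ}
    (hx : (monicGeg lam h0 (n + 1)).IsRoot x) :
    (2 * lam + 1) * (2 * lam + 9) * x ^ 2 ≤ 4 * (n * (n + 2 * lam + 2)) * (1 - x ^ 2) := by
  have hy0 := (monic_monicGeg h0 (n + 1)).ne_zero
  have hsp := splits_monicGeg hlam h0 (n + 1)
  have hode := gegOp_monicGeg h0 (n + 1)
  have hcount : (monicGeg lam h0 (n + 1)).rootMultiplicity x ≤ 1 := by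
    rw [← count_roots]
    exact Multiset.nodup_iff_count_le_one.1 (nodup_roots_monicGeg hlam h0 (n + 1)) x
  set y := monicGeg lam h0 (n + 1)
  obtain ⟨q, hq⟩ := dvd_iff_isRoot.2 hx
  have hqs : q.Splits := hsp.of_dvd hy0 ⟨X - C x, by rw [hq]; ring⟩
  have hqx : q.eval x ≠ 0 := by
    intro h
    obtain ⟨s, hs⟩ := dvd_iff_isRoot.2 h
    have := (le_rootMultiplicity_iff (n := 2) (a := x) hy0).2 ⟨s, by rw [hq, hs]; ring⟩
    omega
  have hL := hqs.eval_mul_derivative_derivative_le x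
  have h1 := congrArg (eval x) hode
  have h2 := congrArg (fun p => eval x (derivative p)) hode
  rw [hq] at h1 h2
  simp [gegOp, gegEig] at h1 h2
  set a := q.eval x
  set b := (derivative q).eval x
  set c := (derivative (derivative q)).eval x
  have ha : 0 < a ^ 2 := by positivity
  have e1 : 2 * (1 - x ^ 2) * b = (2 * lam + 1) * x * a := by linear_combination -h1
  have e2 : 3 * (1 - x ^ 2) * c =
      (2 * lam + 3) * x * (2 * b) - n * (n + 2 * lam + 2) * a := by
    linear_combination -h2
  have h3 : 4 * a * ((1 - x ^ 2) * (3 * (1 - x ^ 2) * c)) ≤ 3 * (2 * (1 - x ^ 2) * b) ^ 2 := by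
    nlinarith [mul_le_mul_of_nonneg_left hL (sq_nonneg (1 - x ^ 2))]
  rw [e2] at h3
  have h4 : 4 * a * ((1 - x ^ 2) * ((2 * lam + 3) * x * (2 * b) - n * (n + 2 * lam + 2) * a))
      = a ^ 2 * (4 * (2 * lam + 3) * (2 * lam + 1) * x ^ 2
        - 4 * (n * (n + 2 * lam + 2)) * (1 - x ^ 2)) := by
    linear_combination 4 * a * (2 * lam + 3) * x * e1
  rw [h4, e1] at h3
  refine le_of_mul_le_mul_left ?_ ha
  linarith

/-- Gauss quadrature at the zeros of the Gegenbauer polynomial has nonnegative weights. -/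
lemma gegFunctional_nonneg_of_roots {lam : ℝ} (hlam : 1/2 ≤ lam) (h0 : 0 ≤ lam) {k : ℕ}
    {f : ℝ[X]} (hf : f.natDegree < 2 * k)
    (hroots : ∀ x, (monicGeg lam h0 k).IsRoot x → 0 ≤ f.eval x) :
    0 ≤ gegFunctional lam hlam f := by
  have hsp := splits_monicGeg hlam h0 k
  have hnd := nodup_roots_monicGeg hlam h0 k
  have hmon := monic_monicGeg h0 k
  have hdeg := natDegree_monicGeg h0 k
  have horth := gegFunctional_monicGeg_mul_eq_zero hlam h0 k k le_rfl
  set y := monicGeg lam h0 k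
  set S := y.roots.toFinset with hS
  have hcard : S.card = k := by
    rw [hS, Multiset.toFinset_card_of_nodup hnd, ← hsp.natDegree_eq_card_roots, hdeg]
  have hmem : ∀ x ∈ S, y.IsRoot x := fun x hx =>
    isRoot_of_mem_roots (Multiset.mem_toFinset.1 hx)
  have hinj : Set.InjOn (id : ℝ → ℝ) S := Function.injective_id.injOn
  have hquad : ∀ g : ℝ[X], g.natDegree < 2 * k → gegFunctional lam hlam g =
      ∑ x ∈ S, g.eval x * gegFunctional lam hlam (Lagrange.basis S id x) := by
    intro g hg
    have hk : 0 < k := by omega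
    have hdiv := modByMonic_add_div g y
    have hq : (g /ₘ y).degree < (k : WithBot ℕ) := by
      refine degree_le_natDegree.trans_lt ?_
      rw [natDegree_divByMonic g hmon, hdeg]
      exact_mod_cast (by omega : g.natDegree - k < k)
    have hr : (g %ₘ y).degree < (S.card : WithBot ℕ) := by
      rw [hcard, ← hdeg, ← degree_eq_natDegree hmon.ne_zero]
      exact degree_modByMonic_lt g hmon
    have h1 : gegFunctional lam hlam g = gegFunctional lam hlam (g %ₘ y) := by
      conv_lhs => rw [← hdiv, map_add, horth _ hq, add_zero]
    rw [h1, Lagrange.eq_interpolate hinj hr, Lagrange.interpolate_apply, map_sum]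
    refine Finset.sum_congr rfl fun x hx => ?_
    rw [gegFunctional_C_mul]
    congr 1
    conv_rhs => rw [← hdiv]
    simp [(hmem x hx).eq_zero]
  rw [hquad f hf]
  refine Finset.sum_nonneg fun x hx => mul_nonneg (hroots x (hmem x hx)) ?_
  have hb : gegFunctional lam hlam (Lagrange.basis S id x ^ 2)
      = gegFunctional lam hlam (Lagrange.basis S id x) := by
    have hk : 0 < k := hcard ▸ Finset.card_pos.2 ⟨x, hx⟩
    rw [hquad, Finset.sum_eq_single_of_mem x hx]
    · have := Lagrange.eval_basis_self hinj hx
      rw [id] at this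
      rw [eval_pow, this]; ring
    · intro z hz hzx
      have := Lagrange.eval_basis_of_ne (v := (id : ℝ → ℝ)) hzx.symm hz
      rw [id] at this
      rw [eval_pow, this]; ring
    · have h1 : (Lagrange.basis S id x).natDegree = S.card - 1 :=
        natDegree_eq_of_degree_eq_some (Lagrange.degree_basis hinj hx)
      have h2 := natDegree_pow_le (p := Lagrange.basis S id x) (n := 2)
      omega
  rw [← hb]
  exact gegFunctional_nonneg hlam fun x => by rw [eval_pow]; positivity

lemma gegFunctional_sq_le {lam : ℝ} (hlam : 1/2 ≤ lam) {n : ℕ} {q : ℝ[X]}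
    (hq : q.natDegree < n) :
    (2 * lam + 1) * (2 * lam + 9) * gegFunctional lam hlam (q ^ 2) ≤
      (4 * (n * (n + 2 * lam + 2)) + (2 * lam + 1) * (2 * lam + 9)) *
        gegFunctional lam hlam ((1 - X ^ 2) * q ^ 2) := by
  have h0 : 0 ≤ lam := by linarith
  set G := (2 * lam + 1) * (2 * lam + 9) with hG
  set H := 4 * (n * (n + 2 * lam + 2)) with hH
  have e : gegFunctional lam hlam (q ^ 2 * (C H - C (H + G) * X ^ 2)) =
      (H + G) * gegFunctional lam hlam ((1 - X ^ 2) * q ^ 2)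
        - G * gegFunctional lam hlam (q ^ 2) := by
    rw [← gegFunctional_C_mul, ← gegFunctional_C_mul, ← map_sub]
    congr 1
    rw [C_add]; ring
  have hpos := gegFunctional_nonneg_of_roots hlam h0 (k := n + 1)
    (f := q ^ 2 * (C H - C (H + G) * X ^ 2)) ?_ ?_
  · linarith
  · have h1 := natDegree_mul_le (p := q ^ 2) (q := C H - C (H + G) * X ^ 2)
    have h2 := natDegree_pow_le (p := q) (n := 2)
    have h3 : (C H - C (H + G) * X ^ 2).natDegree ≤ 2 := by compute_degree
    omega
  · intro x hx
    have h1 := sq_mul_le_of_isRoot_monicGeg hlam h0 hx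
    rw [← hG, ← hH] at h1
    rw [eval_mul, eval_pow]
    refine mul_nonneg (sq_nonneg _) ?_
    simp only [eval_sub, eval_mul, eval_pow, eval_C, eval_X]
    linarith

/-- The Markov inequality in squared form. -/
lemma gegFunctional_derivative_sq_le {lam : ℝ} (hlam : 1/2 ≤ lam) (hlam' : 2 ≤ lam) {n : ℕ}
    (hn : 0 < n) {p : ℝ[X]} (hp : p.natDegree ≤ n) :
    gegFunctional lam hlam (derivative p ^ 2) ≤
      (n : ℝ) * ((n : ℝ) + lam) * ((n : ℝ) + 2*lam) * ((n : ℝ) + 3*lam) /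
        ((lam + 1) * (lam + 2)) * gegFunctional lam hlam (p ^ 2) := by
  have hd : (derivative p).natDegree < n := by
    have := natDegree_derivative_le p
    omega
  have h1 := gegFunctional_sq_le hlam hd
  have h2 := gegFunctional_energy_le hlam n p (degree_le_natDegree.trans_lt
    (by exact_mod_cast (by omega : p.natDegree < n + 1)))
  have hN : (1 : ℝ) ≤ n := by exact_mod_cast hn
  have hA : 0 ≤ gegFunctional lam hlam (p ^ 2) :=
    gegFunctional_nonneg hlam fun x => by rw [eval_pow]; positivity
  rw [gegEig] at h2
  set A := gegFunctional lam hlam (p ^ 2)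
  set B := gegFunctional lam hlam (derivative p ^ 2)
  set D := gegFunctional lam hlam ((1 - X ^ 2) * derivative p ^ 2)
  set m : ℝ := (n : ℝ)
  set G := (2 * lam + 1) * (2 * lam + 9) with hG
  set H := 4 * (m * (m + 2 * lam + 2)) with hH
  have hGpos : 0 < G := by positivity
  have hHpos : 0 ≤ H := by positivity
  have hK : (H + G) * ((lam + 1) * (lam + 2)) ≤ G * ((m + lam) * (m + 3 * lam)) := by
    have hc : 4 * ((lam + 1) * (lam + 2)) ≤ G := by rw [hG]; nlinarith
    have hm : m * (m + 2 * lam + 2) ≤ (m + lam) * (m + 3 * lam) - (lam + 1) * (lam + 2) := by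
      nlinarith [mul_nonneg (by linarith : 0 ≤ m) (by linarith : 0 ≤ lam - 1)]
    have hm0 : 0 ≤ m * (m + 2 * lam + 2) := by positivity
    calc (H + G) * ((lam + 1) * (lam + 2))
        = 4 * ((lam + 1) * (lam + 2)) * (m * (m + 2 * lam + 2))
          + G * ((lam + 1) * (lam + 2)) := by rw [hH]; ring
      _ ≤ G * ((m + lam) * (m + 3 * lam) - (lam + 1) * (lam + 2))
          + G * ((lam + 1) * (lam + 2)) := by gcongr
      _ = _ := by ring
  have hden : 0 < (lam + 1) * (lam + 2) := by positivity
  rw [div_mul_eq_mul_div, le_div_iff₀ hden]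
  refine le_of_mul_le_mul_left ?_ hGpos
  have hX : 0 ≤ m * (m + 2 * lam) * A := by positivity
  calc G * (B * ((lam + 1) * (lam + 2))) = G * B * ((lam + 1) * (lam + 2)) := by ring
    _ ≤ (H + G) * D * ((lam + 1) * (lam + 2)) := by gcongr
    _ ≤ (H + G) * (m * (m + 2 * lam) * A) * ((lam + 1) * (lam + 2)) := by gcongr
    _ = (H + G) * ((lam + 1) * (lam + 2)) * (m * (m + 2 * lam) * A) := by ring
    _ ≤ G * ((m + lam) * (m + 3 * lam)) * (m * (m + 2 * lam) * A) := by gcongr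
    _ = _ := by ring

/-- Exact Markov ratio of the Gegenbauer polynomial with parameter `lam + 1`. -/
lemma gegFunctional_derivative_sq_monicGeg {lam : ℝ} (hlam : 1/2 ≤ lam) (h0 : 0 ≤ lam + 1)
    (n : ℕ) :
    (2 * lam + 3) * (2 * lam + 5) *
        gegFunctional lam hlam (derivative (monicGeg (lam + 1) h0 n) ^ 2) =
      2 * gegEig (lam + 1) n * (gegEig (lam + 1) n + (lam + 2) * (2 * lam + 1)) *
        gegFunctional lam hlam (monicGeg (lam + 1) h0 n ^ 2) := by
  have hode := gegOp_monicGeg h0 n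
  set y := monicGeg (lam + 1) h0 n
  set N := gegEig (lam + 1) n
  rw [← gegFunctional_C_mul, ← gegFunctional_C_mul, ← sub_eq_zero, ← map_sub,
    ← gegFunctional_parts hlam
      (C (2 * lam + 3) * (X * derivative y ^ 2 + C N * (y * derivative y))
        - C (N - 2 * lam - 4) * (X * (1 - X ^ 2) * derivative y ^ 2 + C N * X * y ^ 2
          + C (2 * lam + 2) * ((1 - X ^ 2) * (y * derivative y))))]
  congr 1
  rw [gegOp] at hode
  simp only [derivative_add, derivative_sub, derivative_mul, derivative_C, derivative_X,
    derivative_one, derivative_pow, derivative_ofNat, C_add, C_sub, C_mul, C_ofNat, C_1]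
    at hode ⊢
  push_cast
  simp only [C_ofNat]
  linear_combination ((2 * C lam + 3) * (2 * X * derivative y + C N * y)
    - (C N - 2 * C lam - 4) * (2 * X * (1 - X ^ 2) * derivative y
      + (2 * C lam + 2) * (1 - X ^ 2) * y)) * hode

lemma markov_lower_constant_le {lam m : ℝ} (hlam : 2 ≤ lam) (hm : 0 ≤ m) :
    1/8 * (m * (m + lam) * (m + 2*lam) * (m + 3*lam) / ((lam + 1) * (lam + 2))) ≤
      2 * (m * (m + 2 * (lam + 1))) * (m * (m + 2 * (lam + 1)) + (lam + 2) * (2 * lam + 1)) /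
        ((2 * lam + 3) * (2 * lam + 5)) := by
  have hden : 0 < (lam + 1) * (lam + 2) := by positivity
  have hden' : 0 < (2 * lam + 3) * (2 * lam + 5) := by positivity
  rw [← mul_div_assoc, div_le_div_iff₀ hden hden']
  have h1 : 3 * ((2 * lam + 3) * (2 * lam + 5)) ≤ 16 * ((lam + 1) * (lam + 2)) := by nlinarith
  have h2 : (m + lam) * (m + 3 * lam) ≤
      3 * (m * (m + 2 * (lam + 1)) + (lam + 2) * (2 * lam + 1)) := by nlinarith
  have h3 : m * (m + 2 * lam) ≤ m * (m + 2 * (lam + 1)) := by nlinarith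
  set U := m * (m + 2 * (lam + 1))
  set V := U + (lam + 2) * (2 * lam + 1)
  have hU : 0 ≤ U := by positivity
  have hV : 0 ≤ V := by positivity
  have hW : 0 ≤ (m + lam) * (m + 3 * lam) := by positivity
  calc 1/8 * (m * (m + lam) * (m + 2*lam) * (m + 3*lam)) * ((2 * lam + 3) * (2 * lam + 5))
      = 1/8 * ((m * (m + 2 * lam)) * ((m + lam) * (m + 3 * lam))
        * ((2 * lam + 3) * (2 * lam + 5))) := by ring
    _ ≤ 1/8 * (U * (3 * V) * ((2 * lam + 3) * (2 * lam + 5))) := by gcongr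
    _ = 1/8 * (U * V * (3 * ((2 * lam + 3) * (2 * lam + 5)))) := by ring
    _ ≤ 1/8 * (U * V * (16 * ((lam + 1) * (lam + 2)))) := by gcongr
    _ = _ := by ring

theorem markov_two_sided_F (lam : ℝ) (hlam : 2 < lam) (n : ℕ) (hn : 3 ≤ n) :
    1/8 * ((n : ℝ) * ((n : ℝ) + lam) * ((n : ℝ) + 2*lam) * ((n : ℝ) + 3*lam) /
        ((lam + 1) * (lam + 2)))
      ≤ (markovConst lam n)^2 ∧
    (markovConst lam n)^2 ≤
      (n : ℝ) * ((n : ℝ) + lam) * ((n : ℝ) + 2*lam) * ((n : ℝ) + 3*lam) /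
        ((lam + 1) * (lam + 2)) := by
  have hl : 1/2 ≤ lam := by linarith
  have h0 : 0 ≤ lam + 1 := by linarith
  set F := (n : ℝ) * ((n : ℝ) + lam) * ((n : ℝ) + 2*lam) * ((n : ℝ) + 3*lam) /
        ((lam + 1) * (lam + 2)) with hF
  have hF0 : 0 ≤ F := by positivity
  have hpos : ∀ p : ℝ[X], p ≠ 0 → 0 < gegFunctional lam hl (p ^ 2) := fun p hp =>
    gegFunctional_pos hl (fun x => by rw [eval_pow]; positivity) (pow_ne_zero 2 hp)
  have hratio : ∀ p : ℝ[X],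
      (gegNorm lam (fun x => (derivative p).eval x) / gegNorm lam (fun x => p.eval x)) ^ 2 =
        gegFunctional lam hl (derivative p ^ 2) / gegFunctional lam hl (p ^ 2) := fun p => by
    rw [div_pow, gegNorm_sq hl, gegNorm_sq hl]
  set S := { r : ℝ | ∃ p : Polynomial ℝ, p ≠ 0 ∧ p.natDegree ≤ n ∧
    r = gegNorm lam (fun x => (Polynomial.derivative p).eval x) /
        gegNorm lam (fun x => p.eval x) } with hS
  have hle : ∀ r ∈ S, r ≤ √F := by
    rintro r ⟨p, hp0, hpn, rfl⟩
    refine Real.le_sqrt_of_sq_le ?_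
    rw [hratio, div_le_iff₀ (hpos p hp0)]
    exact gegFunctional_derivative_sq_le hl hlam.le (by omega) hpn
  have hy0 := (monic_monicGeg h0 n).ne_zero
  set y := monicGeg (lam + 1) h0 n with hy
  have hmem : gegNorm lam (fun x => (derivative y).eval x) / gegNorm lam (fun x => y.eval x) ∈ S :=
    ⟨y, hy0, (natDegree_monicGeg h0 n).le, rfl⟩
  have hge := le_csSup ⟨√F, hle⟩ hmem
  have hsup := csSup_le ⟨_, hmem⟩ hle
  have hr0 : 0 ≤ gegNorm lam (fun x => (derivative y).eval x) /
      gegNorm lam (fun x => y.eval x) := div_nonneg (gegNorm_nonneg _ _) (gegNorm_nonneg _ _)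
  rw [show markovConst lam n = sSup S from rfl]
  constructor
  · refine le_trans ?_ (pow_le_pow_left₀ hr0 hge 2)
    rw [hratio]
    refine (markov_lower_constant_le hlam.le (Nat.cast_nonneg n)).trans ?_
    have h := gegFunctional_derivative_sq_monicGeg hl h0 n
    rw [gegEig, ← hy] at h
    rw [div_le_div_iff₀ (by positivity) (hpos y hy0)]
    linarith
  · refine (pow_le_pow_left₀ (hr0.trans hge) hsup 2).trans ?_
    rw [Real.sq_sqrt hF0]
end
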